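/- Telescoped gradient bound for biased gradient descent: Let d ≥ 1 and let L : ℝ^d → ℝ be differentiable with β-Lipschitz gradient for some β > 0. Let (w_t)_{t≥1} be generated by w_{t+1} = w_t − η_t g_t with arbitrary descent vectors g_t ∈ ℝ^d and step sizes 0 < η_t ≤ 1/β, and set δ_t² = ‖g_t − ∇L(w_t)‖². Then for every T ≥ 1, ∑_{t=1}^T η_t ‖∇L(w_t)‖² ≤ 2 (L(w_1) − L(w_{T+1})) + ∑_{t=1}^T η_t δ_t². -/

import Mathlib

open Finset

/-!
For a `β`-smooth function the quadratic upper bound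
`L (x + v) ≤ L x + ⟪∇L x, v⟫ + β / 2 * ‖v‖ ^ 2` (`descent_lemma`) with `v = -η g` and `β η ≤ 1`
gives `L (x - η g) ≤ L x - η ⟪∇L x, g⟫ + η / 2 * ‖g‖ ^ 2`. Completing the square, the right-hand
side is `L x + η / 2 * (‖g - ∇L x‖ ^ 2 - ‖∇L x‖ ^ 2)`, which is the one-step bound
(`one_step_bound`). Summing over the steps telescopes.
-/

section

variable {E : Type*} [NormedAddCommGroup E] [InnerProductSpace ℝ E] [CompleteSpace E]

/-- The difference of the two sides, along the segment from `x` to `x + v`, has nonpositive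
derivative by Cauchy–Schwarz and the Lipschitz bound on the gradient. -/
lemma descent_lemma (L : E → ℝ) (β : ℝ) (hL : Differentiable ℝ L)
    (hs : ∀ w w', ‖gradient L w - gradient L w'‖ ≤ β * ‖w - w'‖) (x v : E) :
    L (x + v) ≤ L x + inner ℝ (gradient L x) v + β / 2 * ‖v‖ ^ 2 := by
  have hd : ∀ s : ℝ, HasDerivAt
      (fun s : ℝ => L (x + s • v) - s * inner ℝ (gradient L x) v - β / 2 * ‖v‖ ^ 2 * s ^ 2)
      (inner ℝ (gradient L (x + s • v)) v - inner ℝ (gradient L x) v - β * ‖v‖ ^ 2 * s) s := by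
    intro s
    have hline : HasDerivAt (fun s : ℝ => x + s • v) v s := by
      simpa using ((hasDerivAt_id s).smul_const v).const_add x
    have hcomp : HasDerivAt (fun s : ℝ => L (x + s • v))
        (inner ℝ (gradient L (x + s • v)) v) s := by
      exact ((hL (x + s • v)).hasGradientAt.hasFDerivAt.comp_hasDerivAt s hline).congr_deriv
        (by simp)
    have hlin := (hasDerivAt_id s).mul_const (inner ℝ (gradient L x) v)
    have hquad := (hasDerivAt_pow 2 s).const_mul (β / 2 * ‖v‖ ^ 2)
    refine ((hcomp.sub hlin).sub hquad).congr_deriv ?_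
    push_cast
    ring
  have hanti := antitoneOn_of_deriv_nonpos (convex_Icc (0 : ℝ) 1)
    (fun s _ => (hd s).continuousAt.continuousWithinAt)
    (fun s _ => (hd s).differentiableAt.differentiableWithinAt)
    (fun s hs' => by
      rw [interior_Icc] at hs'
      rw [(hd s).deriv, ← inner_sub_left]
      have hcs := real_inner_le_norm (gradient L (x + s • v) - gradient L x) v
      have hlip := hs (x + s • v) x
      rw [add_sub_cancel_left, norm_smul, Real.norm_of_nonneg hs'.1.le] at hlip
      nlinarith [mul_le_mul_of_nonneg_right hlip (norm_nonneg v)])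
  have h01 := hanti (Set.left_mem_Icc.2 zero_le_one) (Set.right_mem_Icc.2 zero_le_one) zero_le_one
  simp only [one_smul, zero_smul, add_zero] at h01
  linarith

lemma one_step_bound (L : E → ℝ) (β : ℝ) (hβ : 0 < β) (hL : Differentiable ℝ L)
    (hs : ∀ w w', ‖gradient L w - gradient L w'‖ ≤ β * ‖w - w'‖) (x g : E) (η : ℝ)
    (hη : 0 < η) (hηβ : η ≤ 1 / β) :
    η * ‖gradient L x‖ ^ 2 ≤
      2 * (L x - L (x - η • g)) + η * ‖g - gradient L x‖ ^ 2 := by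
  have hdesc := descent_lemma L β hL hs x (-(η • g))
  rw [← sub_eq_add_neg, inner_neg_right, inner_smul_right, norm_neg, norm_smul,
    Real.norm_of_nonneg hη.le] at hdesc
  have hβη : η * β ≤ 1 := (le_div_iff₀ hβ).1 hηβ
  have hquad : η * β * (η * ‖g‖ ^ 2) ≤ 1 * (η * ‖g‖ ^ 2) :=
    mul_le_mul_of_nonneg_right hβη (by positivity)
  rw [norm_sub_sq_real, real_inner_comm]
  linarith

end

/-- Telescoped gradient bound for biased gradient descent. -/
theorem biased_gd_telescoped {d : ℕ} (hd : 1 ≤ d)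
    (L : EuclideanSpace ℝ (Fin d) → ℝ) (β : ℝ) (hβ : 0 < β)
    (hLdiff : Differentiable ℝ L)
    (hLsmooth : ∀ w w', ‖gradient L w - gradient L w'‖ ≤ β * ‖w - w'‖)
    (w g : ℕ → EuclideanSpace ℝ (Fin d)) (η : ℕ → ℝ)
    (hη : ∀ t, 0 < η t) (hηβ : ∀ t, η t ≤ 1 / β)
    (hupd : ∀ t, 1 ≤ t → w (t + 1) = w t - η t • g t)
    (T : ℕ) (hT : 1 ≤ T) :
    ∑ t ∈ Finset.Icc 1 T, η t * ‖gradient L (w t)‖ ^ 2 ≤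
      2 * (L (w 1) - L (w (T + 1))) +
        ∑ t ∈ Finset.Icc 1 T, η t * ‖g t - gradient L (w t)‖ ^ 2 := by
  clear hT
  induction T with
  | zero => simp
  | succ n ih =>
    have hstep := one_step_bound L β hβ hLdiff hLsmooth (w (n + 1)) (g (n + 1)) (η (n + 1))
      (hη _) (hηβ _)
    rw [← hupd (n + 1) (by omega)] at hstep
    rw [Finset.sum_Icc_succ_top (by omega), Finset.sum_Icc_succ_top (by omega)]
    linarith
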